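/- arXiv:2003.13467 — 7 statements merged into one kernel-verified Lean document; each statement's English description precedes it below -/
import Mathlib

section
/- Let W be a real inner product space, r ∈ (1,∞), and r̂ := min(r,2). Let ς : [0,∞) → ℝ be continuous, suppose the map α ↦ α·ς(α) is differentiable on (0,∞), and suppose there exist real numbers ς_de ≥ 0 and ς_sm, ς_hc > 0 such that for all α > 0 one has ς_sm·(ς_de^r + α^r)^((r−2)/r) ≤ d/dα(α·ς(α)) ≤ ς_hc·(ς_de^r + α^r)^((r−2)/r). Define σ : W → W by σ(τ) := ς(‖τ‖_W)·τ. Then there exists a constant C > 0 depending only on r such that for all τ, η ∈ W with τ ≠ η: ‖σ(τ) − σ(η)‖_W ≤ C·ς_hc·(ς_de^r + ‖τ‖_W^r + ‖η‖_W^r)^((r−2)/r)·‖τ − η‖_W. -/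
open Real

lemma aux_inc (r : ℝ) (hr : 1 < r) :
    ∃ C : ℝ, 0 < C ∧ ∀ (g : ℝ → ℝ) (d h : ℝ), ContinuousOn g (Set.Ici 0) →
      (∀ t : ℝ, 0 < t → DifferentiableAt ℝ g t) → 0 ≤ d → 0 < h →
      (∀ t : ℝ, 0 < t → deriv g t ≤ h * (d ^ r + t ^ r) ^ ((r - 2) / r)) →
      ∀ a b : ℝ, 0 < a → 0 ≤ b → b ≤ a →
        g a - g b ≤ C * h * (d ^ r + a ^ r) ^ ((r - 2) / r) * (a - b) := by
  have hr0 : 0 < r := by linarith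
  rcases le_or_gt 2 r with h2 | h2
  · refine ⟨1, one_pos, ?_⟩
    intro g d h hc hd hd0 hh hb a b ha hb0 hba
    rw [one_mul]
    have hd' : 0 ≤ d ^ r := rpow_nonneg hd0 r
    refine (convex_Icc b a).image_sub_le_mul_sub_of_deriv_le
      (hc.mono fun x hx => hb0.trans hx.1) ?_ ?_ b ⟨le_rfl, hba⟩ a ⟨hba, le_rfl⟩ hba
    · rw [interior_Icc]
      intro x hx
      exact (hd x (hb0.trans_lt hx.1)).differentiableWithinAt
    · rw [interior_Icc]
      intro x hx
      have hx0 : 0 < x := hb0.trans_lt hx.1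
      refine (hb x hx0).trans ?_
      have hxr : 0 ≤ x ^ r := rpow_nonneg hx0.le r
      have : x ^ r ≤ a ^ r := rpow_le_rpow hx0.le hx.2.le hr0.le
      exact mul_le_mul_of_nonneg_left
        (rpow_le_rpow (by linarith) (by linarith) (div_nonneg (by linarith) hr0.le)) hh.le
  · refine ⟨1 / (r - 1), by apply one_div_pos.2; linarith, ?_⟩
    intro g d h hc hd hd0 hh hb a b ha hb0 hba
    have hr1 : 0 < r - 1 := by linarith
    have hd' : 0 ≤ d ^ r := rpow_nonneg hd0 r
    have har : 0 < a ^ r := rpow_pos_of_pos ha r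
    set F := (d ^ r + a ^ r) ^ ((r - 2) / r) with hF
    have hFp : 0 < F := rpow_pos_of_pos (by linarith) _
    set A := h * F * a ^ (2 - r) / (r - 1) with hA
    have hG : ∀ x : ℝ, 0 < x → HasDerivAt (fun t : ℝ => A * t ^ (r - 1) - g t)
        (A * ((r - 1) * x ^ (r - 1 - 1)) - deriv g x) x := fun x hx =>
      ((Real.hasDerivAt_rpow_const (Or.inl hx.ne')).const_mul A).sub (hd x hx).hasDerivAt
    have mono : MonotoneOn (fun t : ℝ => A * t ^ (r - 1) - g t) (Set.Icc b a) := by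
      apply monotoneOn_of_deriv_nonneg (convex_Icc b a)
      · apply ContinuousOn.sub
        · exact (continuous_const.mul (Real.continuous_rpow_const hr1.le)).continuousOn
        · exact hc.mono fun x hx => hb0.trans hx.1
      · rw [interior_Icc]
        intro x hx
        exact (hG x (hb0.trans_lt hx.1)).differentiableAt.differentiableWithinAt
      · rw [interior_Icc]
        intro x hx
        have hx0 : 0 < x := hb0.trans_lt hx.1
        rw [(hG x hx0).deriv]
        have hxr : 0 < x ^ r := rpow_pos_of_pos hx0 r
        have hxa : x ^ r ≤ a ^ r := rpow_le_rpow hx0.le hx.2.le hr0.le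
        have e1 : ∀ y : ℝ, 0 < y → y ^ (r - 2) = (y ^ r) ^ ((r - 2) / r) := by
          intro y hy
          rw [← rpow_mul hy.le]
          congr 1
          field_simp
        have key : (d ^ r + x ^ r) ^ ((r - 2) / r) * a ^ (r - 2) ≤ F * x ^ (r - 2) := by
          rw [e1 a ha, e1 x hx0, hF, ← mul_rpow (by linarith) har.le,
            ← mul_rpow (by linarith) hxr.le]
          apply rpow_le_rpow_of_nonpos (by positivity)
          · nlinarith
          · exact div_nonpos_of_nonpos_of_nonneg (by linarith) hr0.le
        have e2 : a ^ (r - 2) * a ^ (2 - r) = 1 := by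
          rw [← rpow_add ha]
          simp
        have e3 : A * ((r - 1) * x ^ (r - 1 - 1)) = h * ((F * x ^ (r - 2)) * a ^ (2 - r)) := by
          rw [hA, show r - 1 - 1 = r - 2 by ring]
          field_simp
        have hap : 0 < a ^ (2 - r) := rpow_pos_of_pos ha _
        have k2 : (d ^ r + x ^ r) ^ ((r - 2) / r) ≤ (F * x ^ (r - 2)) * a ^ (2 - r) := by
          calc (d ^ r + x ^ r) ^ ((r - 2) / r)
              = (d ^ r + x ^ r) ^ ((r - 2) / r) * a ^ (r - 2) * a ^ (2 - r) := by
                rw [mul_assoc, e2, mul_one]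
            _ ≤ _ := mul_le_mul_of_nonneg_right key hap.le
        have := mul_le_mul_of_nonneg_left k2 hh.le
        rw [e3]
        linarith [hb x hx0]
    have hm := mono ⟨le_rfl, hba⟩ ⟨hba, le_rfl⟩ hba
    simp only at hm
    have f1 : a ^ (2 - r) * a ^ (r - 1) = a := by
      rw [← rpow_add ha, show 2 - r + (r - 1) = 1 by ring, rpow_one]
    have f2 : b ≤ a ^ (2 - r) * b ^ (r - 1) := by
      rcases hb0.eq_or_lt with h0 | h0
      · rw [← h0, zero_rpow hr1.ne', mul_zero]
      · calc b = b ^ (2 - r) * b ^ (r - 1) := by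
              rw [← rpow_add h0, show 2 - r + (r - 1) = 1 by ring, rpow_one]
          _ ≤ _ := mul_le_mul_of_nonneg_right
              (rpow_le_rpow hb0 hba (by linarith)) (rpow_nonneg hb0 _)
    calc g a - g b ≤ A * a ^ (r - 1) - A * b ^ (r - 1) := by linarith
      _ = 1 / (r - 1) * h * F * (a ^ (2 - r) * a ^ (r - 1) - a ^ (2 - r) * b ^ (r - 1)) := by
          rw [hA]; ring
      _ ≤ _ := by
          apply mul_le_mul_of_nonneg_left _ (by positivity)
          rw [f1]; linarith

lemma aux_cmp (r : ℝ) (hr : 1 < r) :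
    ∃ C : ℝ, 0 < C ∧ ∀ d a b : ℝ, 0 ≤ d → 0 < a → 0 ≤ b → b ≤ a →
      (d ^ r + a ^ r) ^ ((r - 2) / r) ≤ C * (d ^ r + a ^ r + b ^ r) ^ ((r - 2) / r) := by
  have hr0 : 0 < r := by linarith
  rcases le_or_gt 2 r with h2 | h2
  · refine ⟨1, one_pos, fun d a b hd ha hb hba => ?_⟩
    have := rpow_nonneg hd r
    have := rpow_pos_of_pos ha r
    have := rpow_nonneg hb r
    rw [one_mul]
    exact rpow_le_rpow (by linarith) (by linarith) (div_nonneg (by linarith) hr0.le)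
  · refine ⟨(1 / 2) ^ ((r - 2) / r), rpow_pos_of_pos (by norm_num) _, fun d a b hd ha hb hba => ?_⟩
    have := rpow_nonneg hd r
    have := rpow_pos_of_pos ha r
    have := rpow_nonneg hb r
    have := rpow_le_rpow hb hba hr0.le
    rw [← mul_rpow (by norm_num) (by linarith)]
    exact rpow_le_rpow_of_nonpos (by linarith) (by linarith)
      (div_nonpos_of_nonpos_of_nonneg (by linarith) hr0.le)

lemma aux_main {W : Type} [NormedAddCommGroup W] [InnerProductSpace ℝ W] (s : ℝ → ℝ) (K : ℝ)
    (τ η : W) (ha : 0 < ‖τ‖) (hba : ‖η‖ ≤ ‖τ‖) (hs : 0 ≤ s ‖τ‖) (hsK : s ‖τ‖ ≤ K)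
    (h0 : ‖η‖ * s ‖η‖ ≤ ‖τ‖ * s ‖τ‖)
    (hg : ‖τ‖ * s ‖τ‖ - ‖η‖ * s ‖η‖ ≤ K * (‖τ‖ - ‖η‖)) :
    ‖s ‖τ‖ • τ - s ‖η‖ • η‖ ≤ 3 * K * ‖τ - η‖ := by
  have e : s ‖τ‖ • τ - s ‖η‖ • η = s ‖τ‖ • (τ - η) + (s ‖τ‖ - s ‖η‖) • η := by module
  have h1 : ‖(s ‖τ‖ - s ‖η‖) • η‖ ≤ 2 * K * (‖τ‖ - ‖η‖) := by
    rw [norm_smul, Real.norm_eq_abs, ← abs_of_nonneg (norm_nonneg η), ← abs_mul, abs_of_nonneg (norm_nonneg η)]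
    have : s ‖τ‖ * (‖τ‖ - ‖η‖) ≤ K * (‖τ‖ - ‖η‖) :=
      mul_le_mul_of_nonneg_right hsK (by linarith)
    have : 0 ≤ s ‖τ‖ * (‖τ‖ - ‖η‖) := mul_nonneg hs (by linarith)
    rw [abs_le]
    constructor <;> nlinarith
  have h2 : ‖τ‖ - ‖η‖ ≤ ‖τ - η‖ := norm_sub_norm_le τ η
  have hK : 0 ≤ K := hs.trans hsK
  rw [e]
  refine (norm_add_le _ _).trans ?_
  have h3 : ‖s ‖τ‖ • (τ - η)‖ ≤ K * ‖τ - η‖ := by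
    rw [norm_smul, Real.norm_eq_abs, abs_of_nonneg hs]
    exact mul_le_mul_of_nonneg_right hsK (norm_nonneg _)
  have := mul_le_mul_of_nonneg_left h2 hK
  linarith

/-- Hölder-continuity part of the theorem on `r`-power-framed functions
(Theorem A.1): if the radial profile `ς` has `α ↦ α ς(α)` with derivative framed
above by `ς_hc (ς_de^r + α^r)^((r-2)/r)`, then `σ(τ) = ς(‖τ‖) • τ` is Hölder
continuous with constant `C ς_hc`, `C` depending only on `r`. -/
theorem stmt0 (r : ℝ) (hr : 1 < r) :
    ∃ C : ℝ, 0 < C ∧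
      ∀ (W : Type) [NormedAddCommGroup W] [InnerProductSpace ℝ W]
        (ς : ℝ → ℝ) (ς_de ς_sm ς_hc : ℝ),
        ContinuousOn ς (Set.Ici 0) →
        (∀ α : ℝ, 0 < α → DifferentiableAt ℝ (fun t : ℝ => t * ς t) α) →
        0 ≤ ς_de → 0 < ς_sm → 0 < ς_hc →
        (∀ α : ℝ, 0 < α →
          ς_sm * (ς_de ^ r + α ^ r) ^ ((r - 2) / r) ≤ deriv (fun t : ℝ => t * ς t) α ∧
          deriv (fun t : ℝ => t * ς t) α ≤ ς_hc * (ς_de ^ r + α ^ r) ^ ((r - 2) / r)) →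
        ∀ τ η : W, τ ≠ η →
          ‖ς (‖τ‖) • τ - ς (‖η‖) • η‖ ≤
            C * ς_hc * (ς_de ^ r + ‖τ‖ ^ r + ‖η‖ ^ r) ^ ((r - 2) / r) * ‖τ - η‖ := by
  obtain ⟨C₁, hC₁, H₁⟩ := aux_inc r hr
  obtain ⟨C₂, hC₂, H₂⟩ := aux_cmp r hr
  refine ⟨3 * (C₁ * C₂), by positivity, ?_⟩
  intro W _ _ s d m h hc hd hd0 hm hh hb
  have gc : ContinuousOn (fun t : ℝ => t * s t) (Set.Ici 0) := continuousOn_id.mul hc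
  have mono : MonotoneOn (fun t : ℝ => t * s t) (Set.Ici 0) := by
    apply monotoneOn_of_deriv_nonneg (convex_Ici 0) gc
    · rw [interior_Ici]
      intro x hx
      exact (hd x hx).differentiableWithinAt
    · rw [interior_Ici]
      intro x hx
      have hx0 : 0 < x := hx
      refine le_trans ?_ (hb x hx0).1
      have := rpow_nonneg hd0 r
      positivity
  have main : ∀ τ η : W, τ ≠ η → ‖η‖ ≤ ‖τ‖ → ‖s (‖τ‖) • τ - s (‖η‖) • η‖ ≤
      3 * (C₁ * C₂) * h * (d ^ r + ‖τ‖ ^ r + ‖η‖ ^ r) ^ ((r - 2) / r) * ‖τ - η‖ := by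
    intro τ η hne hle
    have ha : 0 < ‖τ‖ := by
      rcases (norm_nonneg τ).eq_or_lt with h0 | h0
      · exfalso
        apply hne
        have h1 : ‖η‖ = 0 := le_antisymm (by rw [h0]; exact hle) (norm_nonneg η)
        rw [norm_eq_zero.1 h0.symm, norm_eq_zero.1 h1]
      · exact h0
    have inc : ∀ b, 0 ≤ b → b ≤ ‖τ‖ → ‖τ‖ * s ‖τ‖ - b * s b ≤
        C₁ * C₂ * h * (d ^ r + ‖τ‖ ^ r + ‖η‖ ^ r) ^ ((r - 2) / r) * (‖τ‖ - b) := by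
      intro b hb0 hba
      refine (H₁ (fun t => t * s t) d h gc hd hd0 hh (fun t ht => (hb t ht).2)
        ‖τ‖ b ha hb0 hba).trans ?_
      apply mul_le_mul_of_nonneg_right _ (by linarith)
      have := mul_le_mul_of_nonneg_left (H₂ d ‖τ‖ ‖η‖ hd0 ha (norm_nonneg η) hle)
        (mul_pos hC₁ hh).le
      linarith
    have i0 := inc 0 le_rfl ha.le
    have m0 := mono (Set.mem_Ici.2 le_rfl) (Set.mem_Ici.2 ha.le) ha.le
    simp only [zero_mul, sub_zero] at i0 m0
    have := aux_main s (C₁ * C₂ * h * (d ^ r + ‖τ‖ ^ r + ‖η‖ ^ r) ^ ((r - 2) / r)) τ η ha hle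
      (nonneg_of_mul_nonneg_right m0 ha)
      (le_of_mul_le_mul_left (by linarith) ha)
      (mono (Set.mem_Ici.2 (norm_nonneg η)) (Set.mem_Ici.2 ha.le) hle)
      (inc ‖η‖ (norm_nonneg η) hle)
    linarith
  intro τ η hne
  rcases le_total ‖η‖ ‖τ‖ with hle | hle
  · exact main τ η hne hle
  · have := main η τ hne.symm hle
    rw [norm_sub_rev, norm_sub_rev τ η, add_right_comm]
    exact this
end

section
/- Let r ∈ (1,∞) and r̂ := min(r,2). Let ς : [0,∞) → ℝ be continuous, suppose α ↦ α·ς(α) is differentiable on (0,∞), and suppose there exist ς_de ≥ 0 and ς_sm > 0 such that d/dα(α·ς(α)) ≥ ς_sm·(ς_de^r + α^r)^((r−2)/r) for all α > 0. Then there exists a constant c > 0 depending only on r such that for all real numbers α, β with 0 ≤ β ≤ α and (ς_de, α) ≠ (0, 0): α·ς(α) − β·ς(β) ≥ c·ς_sm·(ς_de^r + α^r + β^r)^((r−2)/r)·(α − β). -/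
open Real

/-- One-dimensional lower bound (A.4): if `α ↦ α ς(α)` has derivative bounded
below by `ς_sm (ς_de^r + α^r)^((r-2)/r)` on `(0,∞)`, then for `0 ≤ β ≤ α`
(excluding the degenerate case `ς_de = α = 0`) one has
`α ς(α) - β ς(β) ≥ c ς_sm (ς_de^r + α^r + β^r)^((r-2)/r) (α - β)`, with `c`
depending only on `r`. -/
theorem stmt2 (r : ℝ) (hr : 1 < r) :
    ∃ c : ℝ, 0 < c ∧
      ∀ (ς : ℝ → ℝ) (ς_de ς_sm : ℝ),
        ContinuousOn ς (Set.Ici 0) →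
        (∀ α : ℝ, 0 < α → DifferentiableAt ℝ (fun t : ℝ => t * ς t) α) →
        0 ≤ ς_de → 0 < ς_sm →
        (∀ α : ℝ, 0 < α →
          ς_sm * (ς_de ^ r + α ^ r) ^ ((r - 2) / r) ≤ deriv (fun t : ℝ => t * ς t) α) →
        ∀ α β : ℝ, 0 ≤ β → β ≤ α → ¬(ς_de = 0 ∧ α = 0) →
          c * ς_sm * (ς_de ^ r + α ^ r + β ^ r) ^ ((r - 2) / r) * (α - β) ≤
            α * ς α - β * ς β := by
  set K : ℝ := ((2:ℝ) ^ (r + 1))⁻¹ with hK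
  have h2 : (1:ℝ) ≤ (2:ℝ) ^ (r + 1) := Real.one_le_rpow (by norm_num) (by linarith)
  have hK0 : 0 < K := by positivity
  have hK1 : K ≤ 1 := inv_le_one_of_one_le₀ h2
  refine ⟨K ^ |(r - 2) / r| / 2, by positivity, ?_⟩
  intro ς d s hc hd hd0 hs hder α β hβ hβα _
  rcases hβα.eq_or_lt with h | hlt
  · subst h; simp
  have hα : 0 < α := by linarith
  have hcont : ∀ a b : ℝ, 0 ≤ a → ContinuousOn (fun t : ℝ => t * ς t) (Set.Icc a b) := by
    intro a b ha
    exact (continuousOn_id.mul hc).mono (fun x hx => le_trans ha hx.1)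
  have hdiff : ∀ a b : ℝ, 0 ≤ a → DifferentiableOn ℝ (fun t : ℝ => t * ς t) (Set.Ioo a b) :=
    fun a b ha x hx => (hd x (lt_of_le_of_lt ha hx.1)).differentiableWithinAt
  obtain ⟨x, hx, hxe⟩ := exists_deriv_eq_slope (fun t : ℝ => t * ς t)
    (show β < (α + β) / 2 by linarith) (hcont _ _ hβ) (hdiff _ _ hβ)
  obtain ⟨y, hy, hye⟩ := exists_deriv_eq_slope (fun t : ℝ => t * ς t)
    (show (α + β) / 2 < α by linarith) (hcont _ _ (by linarith)) (hdiff _ _ (by linarith))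
  have hx0 : 0 < x := lt_of_le_of_lt hβ hx.1
  have hy0 : 0 < y := by linarith [hy.1]
  have hy2 : α / 2 ≤ y := by linarith [hy.1]
  have h1 := hder x hx0
  have h3 := hder y hy0
  rw [hxe, le_div_iff₀ (by linarith)] at h1
  rw [hye, le_div_iff₀ (by linarith)] at h3
  have hdr : 0 ≤ d ^ r := Real.rpow_nonneg hd0 r
  have hβr : 0 ≤ β ^ r := Real.rpow_nonneg hβ r
  have hαr : 0 < α ^ r := Real.rpow_pos_of_pos hα r
  have hyr : 0 < y ^ r := Real.rpow_pos_of_pos hy0 r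
  have hβα' : β ^ r ≤ α ^ r := Real.rpow_le_rpow hβ hβα (by linarith)
  have hyα : y ^ r ≤ α ^ r := Real.rpow_le_rpow hy0.le hy.2.le (by linarith)
  have hyl : (α / 2) ^ r ≤ y ^ r := Real.rpow_le_rpow (by linarith) hy2 (by linarith)
  have hhalf : 2 * K * α ^ r = (α / 2) ^ r := by
    rw [Real.div_rpow hα.le (by norm_num), hK, Real.rpow_add (by norm_num), Real.rpow_one]
    have : (2:ℝ) ^ r ≠ 0 := by positivity
    field_simp
  have hKhalf : 2 * K ≤ 1 := by
    have h4 : (2:ℝ) ≤ (2:ℝ) ^ (r + 1) := by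
      calc (2:ℝ) = (2:ℝ) ^ (1:ℝ) := (Real.rpow_one _).symm
        _ ≤ _ := Real.rpow_le_rpow_of_exponent_le (by norm_num) (by linarith)
    have : K * (2:ℝ) ^ (r + 1) = 1 := inv_mul_cancel₀ (by positivity)
    nlinarith
  have hlow : K * (d ^ r + α ^ r + β ^ r) ≤ d ^ r + y ^ r := by nlinarith
  have key : K ^ |(r - 2) / r| * (d ^ r + α ^ r + β ^ r) ^ ((r - 2) / r)
      ≤ (d ^ r + y ^ r) ^ ((r - 2) / r) := by
    rcases le_total 0 ((r - 2) / r) with hp | hp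
    · rw [abs_of_nonneg hp, ← Real.mul_rpow hK0.le (by positivity)]
      exact Real.rpow_le_rpow (by positivity) hlow hp
    · have e1 : K ^ |(r - 2) / r| ≤ 1 := Real.rpow_le_one hK0.le hK1 (abs_nonneg _)
      have e2 : (d ^ r + α ^ r + β ^ r) ^ ((r - 2) / r) ≤ (d ^ r + y ^ r) ^ ((r - 2) / r) :=
        Real.rpow_le_rpow_of_nonpos (by positivity) (by linarith) hp
      exact (mul_le_of_le_one_left (by positivity) e1).trans e2
  have h5 : 0 ≤ s * (d ^ r + x ^ r) ^ ((r - 2) / r) * ((α + β) / 2 - β) := by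
    have : 0 ≤ (α + β) / 2 - β := by linarith
    positivity
  have h6 := mul_le_mul_of_nonneg_left key (show 0 ≤ s * (α - (α + β) / 2) from
    mul_nonneg hs.le (by linarith))
  linarith
end

section
/- Let r ∈ (1,∞) and r̂ := min(r,2). Let ς : [0,∞) → ℝ be continuous, suppose α ↦ α·ς(α) is differentiable on (0,∞), and suppose there exist ς_de ≥ 0 and ς_hc > 0 such that d/dα(α·ς(α)) ≤ ς_hc·(ς_de^r + α^r)^((r−2)/r) for all α > 0. Then there exists a constant C > 0 depending only on r such that for all real numbers α, β with 0 ≤ β ≤ α and (ς_de, α) ≠ (0, 0): α·ς(α) − β·ς(β) ≤ C·ς_hc·(ς_de^r + α^r + β^r)^((r−2)/r)·(α − β). -/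
open Real

lemma aux_mvt {F G g : ℝ → ℝ} {a b : ℝ} (hb : 0 ≤ b) (hba : b ≤ a)
    (hF : ContinuousOn F (Set.Ici 0)) (hFd : ∀ t, 0 < t → DifferentiableAt ℝ F t)
    (hG : ContinuousOn G (Set.Ici 0)) (hGd : ∀ t, 0 < t → HasDerivAt G (g t) t)
    (h : ∀ t, 0 < t → t < a → deriv F t ≤ g t) : F a - F b ≤ G a - G b := by
  have hsub : Set.Icc b a ⊆ Set.Ici 0 := fun x hx => hb.trans hx.1
  have key := (convex_Icc b a).image_sub_le_mul_sub_of_deriv_le (f := fun t => F t - G t) (C := 0)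
    ((hF.mono hsub).sub (hG.mono hsub))
    (by
      rw [interior_Icc]
      intro x hx
      have hx0 : 0 < x := hb.trans_lt hx.1
      exact ((hFd x hx0).sub (hGd x hx0).differentiableAt).differentiableWithinAt)
    (by
      rw [interior_Icc]
      intro x hx
      have hx0 : 0 < x := hb.trans_lt hx.1
      have h1 := ((hFd x hx0).hasDerivAt.sub (hGd x hx0)).deriv
      have h2 := h x hx0 hx.2
      change deriv (F - G) x ≤ 0
      rw [h1]
      linarith)
    b ⟨le_rfl, hba⟩ a ⟨hba, le_rfl⟩ hba
  linarith

lemma aux_const {F : ℝ → ℝ} {a b K : ℝ} (hb : 0 ≤ b) (hba : b ≤ a)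
    (hF : ContinuousOn F (Set.Ici 0)) (hFd : ∀ t, 0 < t → DifferentiableAt ℝ F t)
    (h : ∀ t, 0 < t → t < a → deriv F t ≤ K) : F a - F b ≤ K * (a - b) := by
  have := aux_mvt (G := fun t => K * t) (g := fun _ => K) hb hba hF hFd (by fun_prop)
    (fun t _ => by simpa using (hasDerivAt_id t).const_mul K) h
  linarith

lemma aux_low {r m S : ℝ} (hr : 1 < r) (hr2 : r < 2) (hm : 0 < m) (hS : 0 < S)
    (h : S ≤ 3 * m ^ r) :
    m ^ (r - 2) ≤ 3 ^ (-((r - 2) / r)) * S ^ ((r - 2) / r) := by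
  have hp : (r - 2) / r ≤ 0 := div_nonpos_of_nonpos_of_nonneg (by linarith) (by linarith)
  have h1 := Real.rpow_le_rpow_of_nonpos hS h hp
  rw [Real.mul_rpow (by norm_num) (by positivity), ← Real.rpow_mul hm.le,
    mul_div_cancel₀ _ (by linarith : r ≠ 0)] at h1
  have h3 : (0:ℝ) < 3 ^ (-((r - 2) / r)) := by positivity
  calc m ^ (r - 2) = 3 ^ (-((r - 2) / r)) * (3 ^ ((r - 2) / r) * m ^ (r - 2)) := by
        rw [← mul_assoc, ← Real.rpow_add (by norm_num)]; simp
    _ ≤ _ := by gcongr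

/-- One-dimensional upper bound (A.6): if `α ↦ α ς(α)` has derivative bounded
above by `ς_hc (ς_de^r + α^r)^((r-2)/r)` on `(0,∞)`, then for `0 ≤ β ≤ α`
(excluding the degenerate case `ς_de = α = 0`) one has
`α ς(α) - β ς(β) ≤ C ς_hc (ς_de^r + α^r + β^r)^((r-2)/r) (α - β)`, with `C`
depending only on `r`. -/
theorem stmt3 (r : ℝ) (hr : 1 < r) :
    ∃ C : ℝ, 0 < C ∧
      ∀ (ς : ℝ → ℝ) (ς_de ς_hc : ℝ),
        ContinuousOn ς (Set.Ici 0) →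
        (∀ α : ℝ, 0 < α → DifferentiableAt ℝ (fun t : ℝ => t * ς t) α) →
        0 ≤ ς_de → 0 < ς_hc →
        (∀ α : ℝ, 0 < α →
          deriv (fun t : ℝ => t * ς t) α ≤ ς_hc * (ς_de ^ r + α ^ r) ^ ((r - 2) / r)) →
        ∀ α β : ℝ, 0 ≤ β → β ≤ α → ¬(ς_de = 0 ∧ α = 0) →
          α * ς α - β * ς β ≤
            C * ς_hc * (ς_de ^ r + α ^ r + β ^ r) ^ ((r - 2) / r) * (α - β) := by
  have hr0 : r ≠ 0 := by linarith
  rcases le_or_gt 2 r with h2 | h2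
  · refine ⟨1, one_pos, ?_⟩
    intro ς d c hς hdiff hd hc hder α β hβ hβα hne
    have hα : 0 ≤ α := hβ.trans hβα
    have hF : ContinuousOn (fun t : ℝ => t * ς t) (Set.Ici 0) := continuousOn_id.mul hς
    have hp : 0 ≤ (r - 2) / r := div_nonneg (by linarith) (by linarith)
    rw [one_mul]
    refine aux_const hβ hβα hF hdiff (fun t ht hta => (hder t ht).trans ?_)
    have h1 : t ^ r ≤ α ^ r := Real.rpow_le_rpow ht.le hta.le (by linarith)
    have h3 : 0 ≤ β ^ r := by positivity
    have h4 : 0 ≤ d ^ r + t ^ r := by positivity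
    exact mul_le_mul_of_nonneg_left (Real.rpow_le_rpow h4 (by linarith) hp) hc.le
  · have hp : (r - 2) / r ≤ 0 := div_nonpos_of_nonpos_of_nonneg (by linarith) (by linarith)
    have hr1 : 0 < r - 1 := by linarith
    refine ⟨3 ^ (-((r - 2) / r)) / (r - 1), by positivity, ?_⟩
    intro ς d c hς hdiff hd hc hder α β hβ hβα hne
    have hα : 0 ≤ α := hβ.trans hβα
    have hF : ContinuousOn (fun t : ℝ => t * ς t) (Set.Ici 0) := continuousOn_id.mul hς
    have hβr : β ^ r ≤ α ^ r := Real.rpow_le_rpow hβ hβα (by linarith)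
    have hβ0 : 0 ≤ β ^ r := by positivity
    have hα0 : 0 ≤ α ^ r := by positivity
    have hd0 : 0 ≤ d ^ r := by positivity
    -- reduce to a bound by `m ^ (r - 2)` with `m = max d α`
    have fin : ∀ m : ℝ, 0 < m → d ≤ m → α ≤ m → (m = d ∨ m = α) →
        α * ς α - β * ς β ≤ c * (m ^ (r - 2) * (α - β)) / (r - 1) →
        α * ς α - β * ς β ≤ 3 ^ (-((r - 2) / r)) / (r - 1) * c *
          (d ^ r + α ^ r + β ^ r) ^ ((r - 2) / r) * (α - β) := by
      intro m hm hdm hαm hmm hle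
      have e1 : d ^ r ≤ m ^ r := Real.rpow_le_rpow hd hdm (by linarith)
      have e2 : α ^ r ≤ m ^ r := Real.rpow_le_rpow hα hαm (by linarith)
      have e3 : 0 < m ^ r := by positivity
      have hS : 0 < d ^ r + α ^ r + β ^ r := by
        rcases hmm with rfl | rfl <;> linarith
      have hl := aux_low hr h2 hm hS (by linarith)
      have hab : 0 ≤ α - β := by linarith
      calc _ ≤ _ := hle
        _ ≤ c * ((3 ^ (-((r - 2) / r)) * (d ^ r + α ^ r + β ^ r) ^ ((r - 2) / r)) * (α - β))
            / (r - 1) := by gcongr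
        _ = _ := by ring
    rcases le_or_gt α d with had | had
    · have hdpos : 0 < d := lt_of_le_of_ne hd (fun h => hne ⟨h.symm, by linarith⟩)
      refine fin d hdpos le_rfl had (Or.inl rfl) ?_
      have hK := aux_const (K := c * d ^ (r - 2)) hβ hβα hF hdiff (fun t ht hta => by
        refine (hder t ht).trans (mul_le_mul_of_nonneg_left ?_ hc.le)
        have h5 : 0 < d ^ r := by positivity
        have h6 : 0 ≤ t ^ r := by positivity
        have h7 := Real.rpow_le_rpow_of_nonpos h5 (by linarith : d ^ r ≤ d ^ r + t ^ r) hp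
        rwa [← Real.rpow_mul hd, mul_div_cancel₀ _ hr0] at h7)
      have hX : 0 ≤ c * (d ^ (r - 2) * (α - β)) := by
        have : 0 ≤ α - β := by linarith
        positivity
      rw [le_div_iff₀ hr1]
      have hK2 : α * ς α - β * ς β ≤ c * (d ^ (r - 2) * (α - β)) := by linarith
      nlinarith
    · have hαpos : 0 < α := lt_of_le_of_lt hd had
      refine fin α hαpos had.le le_rfl (Or.inr rfl) ?_
      have hM := aux_mvt (G := fun t => c / (r - 1) * t ^ (r - 1))
        (g := fun t => c * t ^ (r - 2)) hβ hβα hF hdiff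
        (by
          refine continuousOn_const.mul (continuousOn_id.rpow_const (fun x _ => Or.inr hr1.le)))
        (fun t ht => by
          have := (Real.hasDerivAt_rpow_const (x := t) (p := r - 1) (Or.inl ht.ne')).const_mul
            (c / (r - 1))
          have e : c / (r - 1) * ((r - 1) * t ^ (r - 1 - 1)) = c * t ^ (r - 2) := by
            rw [show r - 1 - 1 = r - 2 by ring]
            field_simp
          rw [e] at this
          exact this)
        (fun t ht hta => by
          refine (hder t ht).trans (mul_le_mul_of_nonneg_left ?_ hc.le)
          have h5 : 0 < t ^ r := by positivity
          have h7 := Real.rpow_le_rpow_of_nonpos h5 (by linarith : t ^ r ≤ d ^ r + t ^ r) hp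
          rwa [← Real.rpow_mul ht.le, mul_div_cancel₀ _ hr0] at h7)
      have q1 : α ^ (r - 1) = α ^ (r - 2) * α := by
        rw [← Real.rpow_add_one hαpos.ne']; ring_nf
      have q2 : α ^ (r - 2) * β ≤ β ^ (r - 1) := by
        rcases hβ.eq_or_lt with h0 | h0
        · rw [← h0, mul_zero]; positivity
        · have : β ^ (r - 1) = β ^ (r - 2) * β := by
            rw [← Real.rpow_add_one h0.ne']; ring_nf
          rw [this]
          exact mul_le_mul_of_nonneg_right
            (Real.rpow_le_rpow_of_nonpos h0 hβα (by linarith)) hβ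
      calc _ ≤ _ := hM
        _ = c * (α ^ (r - 1) - β ^ (r - 1)) / (r - 1) := by ring
        _ ≤ _ := by
          gcongr
          rw [q1]
          linarith
end

section
/- Let r ∈ (1,∞) and r̂ := min(r,2). Let ς : [0,∞) → ℝ be continuous, suppose α ↦ α·ς(α) is differentiable on (0,∞), and suppose there exist ς_de ≥ 0 and ς_sm > 0 such that d/dα(α·ς(α)) ≥ ς_sm·(ς_de^r + α^r)^((r−2)/r) for all α > 0. Then there exists a constant c > 0 depending only on r such that for all α, β > 0: ς(α) + ς(β) ≥ c·ς_sm·(ς_de^r + α^r + β^r)^((r−2)/r). -/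
open Real

lemma aux_mvt_s4 (f : ℝ → ℝ) (hc : ContinuousOn f (Set.Ici 0))
    (hd : ∀ t : ℝ, 0 < t → DifferentiableAt ℝ f t) (a b m : ℝ) (ha : 0 ≤ a) (hab : a ≤ b)
    (hm : ∀ t, a < t → t < b → m ≤ deriv f t) : m * (b - a) ≤ f b - f a := by
  refine Convex.mul_sub_le_image_sub_of_le_deriv (convex_Icc a b)
    (hc.mono fun x hx => ha.trans hx.1) ?_ ?_ a ⟨le_rfl, hab⟩ b ⟨hab, le_rfl⟩ hab
  · intro x hx
    rw [interior_Icc] at hx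
    exact (hd x (ha.trans_lt hx.1)).differentiableWithinAt
  · intro x hx
    rw [interior_Icc] at hx
    exact hm x hx.1 hx.2

/-- Lower bound (A.5) on the sum of radial profile values: if `α ↦ α ς(α)` has
derivative bounded below by `ς_sm (ς_de^r + α^r)^((r-2)/r)` on `(0,∞)`, then for
all `α, β > 0` one has `ς(α) + ς(β) ≥ c ς_sm (ς_de^r + α^r + β^r)^((r-2)/r)`,
with `c` depending only on `r`. -/
theorem stmt4 (r : ℝ) (hr : 1 < r) :
    ∃ c : ℝ, 0 < c ∧
      ∀ (ς : ℝ → ℝ) (ς_de ς_sm : ℝ),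
        ContinuousOn ς (Set.Ici 0) →
        (∀ α : ℝ, 0 < α → DifferentiableAt ℝ (fun t : ℝ => t * ς t) α) →
        0 ≤ ς_de → 0 < ς_sm →
        (∀ α : ℝ, 0 < α →
          ς_sm * (ς_de ^ r + α ^ r) ^ ((r - 2) / r) ≤ deriv (fun t : ℝ => t * ς t) α) →
        ∀ α β : ℝ, 0 < α → 0 < β →
          c * ς_sm * (ς_de ^ r + α ^ r + β ^ r) ^ ((r - 2) / r) ≤ ς α + ς β := by
  have hr0 : 0 < r := by linarith
  have nonneg : ∀ (ς : ℝ → ℝ) (ς_de ς_sm : ℝ),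
        ContinuousOn ς (Set.Ici 0) →
        (∀ α : ℝ, 0 < α → DifferentiableAt ℝ (fun t : ℝ => t * ς t) α) →
        0 ≤ ς_de → 0 < ς_sm →
        (∀ α : ℝ, 0 < α →
          ς_sm * (ς_de ^ r + α ^ r) ^ ((r - 2) / r) ≤ deriv (fun t : ℝ => t * ς t) α) →
        ∀ α : ℝ, 0 < α → 0 ≤ ς α := by
    intro ς d s hc hd hd0 hs h α hα
    have := aux_mvt_s4 (fun t => t * ς t) (continuousOn_id.mul hc) hd 0 α 0 le_rfl hα.le
      (fun t ht _ => le_trans (by positivity) (h t ht))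
    simp only [zero_mul, sub_zero] at this
    exact nonneg_of_mul_nonneg_right this hα
  rcases le_total r 2 with h2 | h2
  · have hp : (r - 2) / r ≤ 0 := div_nonpos_of_nonpos_of_nonneg (by linarith) hr0.le
    refine ⟨1, one_pos, ?_⟩
    intro ς d s hc hd hd0 hs h α β hα hβ
    have hβ0 := nonneg ς d s hc hd hd0 hs h β hβ
    have := aux_mvt_s4 (fun t => t * ς t) (continuousOn_id.mul hc) hd 0 α
      (s * (d ^ r + α ^ r + β ^ r) ^ ((r - 2) / r)) le_rfl hα.le
      (fun t ht hta => le_trans (by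
        have h1 : t ^ r ≤ α ^ r := Real.rpow_le_rpow ht.le hta.le hr0.le
        have h3 : 0 < t ^ r := Real.rpow_pos_of_pos ht r
        have h4 : 0 < β ^ r := Real.rpow_pos_of_pos hβ r
        have h5 : 0 ≤ d ^ r := Real.rpow_nonneg hd0 r
        exact mul_le_mul_of_nonneg_left
          (Real.rpow_le_rpow_of_nonpos (by linarith) (by linarith) hp) hs.le) (h t ht))
    simp only [zero_mul, sub_zero] at this
    rw [mul_comm α] at this
    have := le_of_mul_le_mul_right this hα
    linarith
  · have hp : 0 ≤ (r - 2) / r := div_nonneg (by linarith) hr0.le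
    refine ⟨1 / 2 * ((1 / 2) ^ r / 2) ^ ((r - 2) / r), by positivity, ?_⟩
    intro ς d s hc hd hd0 hs h
    have key : ∀ α β : ℝ, 0 < α → 0 < β → β ≤ α →
        1 / 2 * ((1 / 2) ^ r / 2) ^ ((r - 2) / r) * s *
          (d ^ r + α ^ r + β ^ r) ^ ((r - 2) / r) ≤ ς α + ς β := by
      intro α β hα hβ hab
      have hβ0 := nonneg ς d s hc hd hd0 hs h β hβ
      have hα0 := nonneg ς d s hc hd hd0 hs h (α / 2) (by positivity)
      have := aux_mvt_s4 (fun t => t * ς t) (continuousOn_id.mul hc) hd (α / 2) α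
        (s * (((1 / 2) ^ r / 2) * (d ^ r + α ^ r + β ^ r)) ^ ((r - 2) / r))
        (by positivity) (by linarith)
        (fun t ht _ => le_trans (by
          have h1 : (1 / 2 * α) ^ r ≤ t ^ r :=
            Real.rpow_le_rpow (by positivity) (by linarith) hr0.le
          rw [Real.mul_rpow (by norm_num) hα.le] at h1
          have h3 : β ^ r ≤ α ^ r := Real.rpow_le_rpow hβ.le hab hr0.le
          have h5 : 0 ≤ d ^ r := Real.rpow_nonneg hd0 r
          have h6 : (1 / 2 : ℝ) ^ r ≤ 1 :=
            Real.rpow_le_one (by norm_num) (by norm_num) hr0.le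
          have h7 : 0 < (1 / 2 : ℝ) ^ r := by positivity
          refine mul_le_mul_of_nonneg_left
            (Real.rpow_le_rpow (by positivity) ?_ hp) hs.le
          nlinarith [mul_le_mul_of_nonneg_left h3 h7.le,
            mul_le_mul_of_nonneg_right h6 h5]) (h t (by linarith)))
      rw [Real.mul_rpow (by positivity) (by positivity)] at this
      have h8 : 0 ≤ α / 2 * ς (α / 2) := by positivity
      have h9 : (1 / 2 * ((1 / 2) ^ r / 2) ^ ((r - 2) / r) * s *
          (d ^ r + α ^ r + β ^ r) ^ ((r - 2) / r)) * α ≤ ς α * α := by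
        linarith
      have := le_of_mul_le_mul_right h9 hα
      linarith
    intro α β hα hβ
    rcases le_total β α with hab | hab
    · exact key α β hα hβ hab
    · have := key β α hβ hα hab
      rw [add_right_comm, add_comm (ς α)]
      exact this
end

section
/- Let r ∈ (1,2), let W be a real inner product space, and let δ ≥ 0. Then there exists a constant c > 0 depending only on r such that for all τ, η ∈ W satisfying 2δ + ‖τ‖_W + ‖η‖_W ≥ 2^(2−r)·‖τ − η‖_W, one has (δ^r + ‖τ‖_W^r)^(1/r) · (δ^r + ‖η‖_W^r)^(1/r) ≥ c·(δ^r + ‖τ‖_W^r + ‖η‖_W^r)^(2/r). -/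
open Real

theorem stmt5_aux (r k δ a b : ℝ) (hr : 1 < r) (hk : 1 < k) (hd : 0 ≤ δ) (ha : 0 ≤ a)
    (hb : 0 ≤ b) (h : k * (a - b) ≤ 2 * δ + a + b) :
    δ ^ r + a ^ r + b ^ r ≤ (1 + (2 * ((k + 1) / (k - 1))) ^ r) * (δ ^ r + b ^ r) := by
  have hk' : 0 < k - 1 := by linarith
  have hr0 : 0 ≤ r := by linarith
  set M := (k + 1) / (k - 1) with hM
  have hM0 : 0 ≤ M := by positivity
  have h1 : a ≤ M * (δ + b) := by
    rw [hM, div_mul_eq_mul_div, le_div_iff₀ hk']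
    nlinarith
  have h2 : a ≤ (2 * M) * max δ b := by
    have : δ + b ≤ 2 * max δ b := by linarith [le_max_left δ b, le_max_right δ b]
    nlinarith
  have hm : 0 ≤ max δ b := le_max_of_le_left hd
  have hdr : 0 ≤ δ ^ r := rpow_nonneg hd r
  have hbr : 0 ≤ b ^ r := rpow_nonneg hb r
  have h3 : a ^ r ≤ (2 * M) ^ r * (max δ b) ^ r := by
    rw [← mul_rpow (by positivity) hm]
    exact rpow_le_rpow ha h2 hr0
  have h4 : (max δ b) ^ r ≤ δ ^ r + b ^ r := by
    rcases max_choice δ b with h | h <;> rw [h] <;> linarith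
  have h5 : 0 ≤ (2 * M) ^ r := by positivity
  nlinarith [mul_le_mul_of_nonneg_left h4 h5]

/-- Estimate (A.9), used in the pseudoplastic case `r < 2` of the proof of the
Hölder-continuity part of the theorem on `r`-power-framed functions: whenever
`2δ + ‖τ‖ + ‖η‖ ≥ 2^(2-r) ‖τ - η‖`, one has
`(δ^r + ‖τ‖^r)^(1/r) (δ^r + ‖η‖^r)^(1/r) ≥ c (δ^r + ‖τ‖^r + ‖η‖^r)^(2/r)`,
with `c > 0` depending only on `r`. -/
theorem stmt5 (r : ℝ) (hr1 : 1 < r) (hr2 : r < 2) :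
    ∃ c : ℝ, 0 < c ∧
      ∀ (W : Type) [NormedAddCommGroup W] [InnerProductSpace ℝ W] (δ : ℝ), 0 ≤ δ →
        ∀ τ η : W, (2 : ℝ) ^ (2 - r) * ‖τ - η‖ ≤ 2 * δ + ‖τ‖ + ‖η‖ →
          c * (δ ^ r + ‖τ‖ ^ r + ‖η‖ ^ r) ^ (2 / r) ≤
            (δ ^ r + ‖τ‖ ^ r) ^ (1 / r) * (δ ^ r + ‖η‖ ^ r) ^ (1 / r) := by
  have hk : 1 < (2 : ℝ) ^ (2 - r) := one_lt_rpow (by norm_num) (by linarith)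
  set k := (2 : ℝ) ^ (2 - r) with hkdef
  have hk' : 0 < k - 1 := by linarith
  set K := 1 + (2 * ((k + 1) / (k - 1))) ^ r with hK
  have hK0 : 0 < K := by positivity
  refine ⟨(K⁻¹) ^ (1 / r) * (K⁻¹) ^ (1 / r), by positivity, ?_⟩
  intro W _ _ δ hd τ η h
  have n1 : ‖τ‖ - ‖η‖ ≤ ‖τ - η‖ := norm_sub_norm_le τ η
  have n2 : ‖η‖ - ‖τ‖ ≤ ‖τ - η‖ := by
    rw [norm_sub_rev]; exact norm_sub_norm_le η τ
  have e1 := stmt5_aux r k δ ‖τ‖ ‖η‖ hr1 hk hd (norm_nonneg _) (norm_nonneg _) (by nlinarith)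
  have e2 := stmt5_aux r k δ ‖η‖ ‖τ‖ hr1 hk hd (norm_nonneg _) (norm_nonneg _) (by nlinarith)
  rw [← hK] at e1 e2
  have hS : 0 ≤ δ ^ r + ‖τ‖ ^ r + ‖η‖ ^ r := by positivity
  set S := δ ^ r + ‖τ‖ ^ r + ‖η‖ ^ r with hSdef
  have hr0 : 0 ≤ 1 / r := by positivity
  have f1 : K⁻¹ * S ≤ δ ^ r + ‖η‖ ^ r := by
    rw [inv_mul_le_iff₀ hK0]; exact e1
  have f2 : K⁻¹ * S ≤ δ ^ r + ‖τ‖ ^ r := by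
    rw [inv_mul_le_iff₀ hK0]; linarith
  have hKS : 0 ≤ K⁻¹ * S := by positivity
  have g1 := rpow_le_rpow hKS f1 hr0
  have g2 := rpow_le_rpow hKS f2 hr0
  have hs : S ^ (2 / r) = S ^ (1 / r) * S ^ (1 / r) := by
    rw [← rpow_add_of_nonneg hS hr0 hr0]
    congr 1
    ring
  calc _ = (K⁻¹ * S) ^ (1 / r) * (K⁻¹ * S) ^ (1 / r) := by
        rw [hs, mul_rpow (by positivity) hS]; ring
    _ ≤ _ := mul_le_mul g2 g1 (by positivity) (by positivity)
end

section
/- Let r ∈ (1,∞), r̂ := min(r,2), μ > 0, δ ≥ 0 and a > 0, with δ + α > 0 for the values of α considered. Define f : (0,∞) → ℝ by f(α) := α·μ·(δ^a + α^a)^((r−2)/a). Then f is differentiable on (0,∞) with f′(α) = μ·(δ^a + α^a)^((r−2)/a − 1)·(δ^a + (r−1)·α^a), and for every α > 0: μ·(r̂−1)·(δ^a + α^a)^((r−2)/a) ≤ f′(α) ≤ μ·(r + 1 − r̂)·(δ^a + α^a)^((r−2)/a). -/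
open Real

/-- Derivative computation and two-sided bound (Corollary A.2) for the radial
profile `f(α) = α μ (δ^a + α^a)^((r-2)/a)` of the `(μ,δ,a,r)`-Carreau–Yasuda
law: `f'(α) = μ (δ^a + α^a)^((r-2)/a - 1) (δ^a + (r-1) α^a)` and
`μ (r̂-1) (δ^a + α^a)^((r-2)/a) ≤ f'(α) ≤ μ (r+1-r̂) (δ^a + α^a)^((r-2)/a)`,
where `r̂ = min r 2`. -/
theorem stmt6 (r : ℝ) (hr : 1 < r) (μ δ a : ℝ) (hμ : 0 < μ) (hδ : 0 ≤ δ) (ha : 0 < a) :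
    ∀ α : ℝ, 0 < α →
      HasDerivAt (fun t : ℝ => t * μ * (δ ^ a + t ^ a) ^ ((r - 2) / a))
        (μ * (δ ^ a + α ^ a) ^ ((r - 2) / a - 1) * (δ ^ a + (r - 1) * α ^ a)) α ∧
      μ * (min r 2 - 1) * (δ ^ a + α ^ a) ^ ((r - 2) / a) ≤
        μ * (δ ^ a + α ^ a) ^ ((r - 2) / a - 1) * (δ ^ a + (r - 1) * α ^ a) ∧
      μ * (δ ^ a + α ^ a) ^ ((r - 2) / a - 1) * (δ ^ a + (r - 1) * α ^ a) ≤
        μ * (r + 1 - min r 2) * (δ ^ a + α ^ a) ^ ((r - 2) / a) := by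
  intro α hα
  have hA : 0 ≤ δ ^ a := Real.rpow_nonneg hδ a
  have hB : 0 < α ^ a := Real.rpow_pos_of_pos hα a
  have hS : 0 < δ ^ a + α ^ a := by linarith
  have hP : 0 < (δ ^ a + α ^ a) ^ ((r - 2) / a - 1) := Real.rpow_pos_of_pos hS _
  have hsplit : (δ ^ a + α ^ a) ^ ((r - 2) / a)
      = (δ ^ a + α ^ a) ^ ((r - 2) / a - 1) * (δ ^ a + α ^ a) := by
    rw [Real.rpow_sub_one hS.ne', div_mul_cancel₀ _ hS.ne']
  have hB1 : α ^ (a - 1) * α = α ^ a := by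
    rw [Real.rpow_sub_one hα.ne', div_mul_cancel₀ _ hα.ne']
  refine ⟨?_, ?_, ?_⟩
  · have h1 : HasDerivAt (fun t : ℝ => δ ^ a + t ^ a) (a * α ^ (a - 1)) α :=
      (Real.hasDerivAt_rpow_const (Or.inl hα.ne')).const_add _
    have h2 := h1.rpow_const (p := (r - 2) / a) (Or.inl hS.ne')
    have h3 := ((hasDerivAt_id α).mul_const μ).mul h2
    refine h3.congr_deriv ?_
    simp only [id]
    rw [hsplit]
    generalize (δ ^ a + α ^ a) ^ ((r - 2) / a - 1) = P
    have hc : a * ((r - 2) / a) = r - 2 := mul_div_cancel₀ _ ha.ne'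
    linear_combination (μ * P * α ^ (a - 1) * α) * hc + μ * P * (r - 2) * hB1
  · rw [hsplit]
    have key : (min r 2 - 1) * (δ ^ a + α ^ a) ≤ δ ^ a + (r - 1) * α ^ a := by
      have h1 := mul_nonneg hA (sub_nonneg.2 (min_le_right r 2))
      have h2 := mul_nonneg hB.le (sub_nonneg.2 (min_le_left r 2))
      linarith
    have := mul_le_mul_of_nonneg_left key (mul_pos hμ hP).le
    linarith
  · rw [hsplit]
    have key : δ ^ a + (r - 1) * α ^ a ≤ (r + 1 - min r 2) * (δ ^ a + α ^ a) := by
      have h1 := mul_nonneg hB.le (sub_nonneg.2 (min_le_right r 2))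
      have h2 := mul_nonneg hA (sub_nonneg.2 (min_le_left r 2))
      linarith
    have := mul_le_mul_of_nonneg_left key (mul_pos hμ hP).le
    linarith
end

section
/- Let r ∈ (1,∞), r̂ := min(r,2), δ ≥ 0 and X > 0, and set N := (δ^r + X^r)^((r̂−2)/r) · X^(r+1−r̂). Then there exists a constant C > 0 depending only on r such that X ≤ C·( N^(1/(r−1)) + (δ^(2−r̂)·N)^(1/(r+1−r̂)) ). -/
open Real

lemma aux_root (K q X M : ℝ) (hK : 0 < K) (hq : 0 < q) (hX : 0 < X) (h : K * X ^ q ≤ M) :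
    X ≤ (K ^ (1 / q))⁻¹ * M ^ (1 / q) := by
  have h1 : (K * X ^ q) ^ (1 / q) ≤ M ^ (1 / q) :=
    Real.rpow_le_rpow (by positivity) h (by positivity)
  rw [Real.mul_rpow hK.le (by positivity), ← Real.rpow_mul hX.le, mul_one_div_cancel hq.ne',
    Real.rpow_one] at h1
  rw [inv_mul_eq_div, le_div_iff₀ (by positivity)]
  linarith

lemma aux_base (r s D Y X : ℝ) (hr : 1 < r) (hs : s ≤ 2) (hX : 0 < X) (hD : 0 < D)
    (hY : 0 ≤ Y) (hYD : Y ≤ D) (hXD : X ≤ D) :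
    2 ^ ((s - 2) / r) * D ^ (s - 2) ≤ (Y ^ r + X ^ r) ^ ((s - 2) / r) := by
  have hr0 : 0 < r := by linarith
  have e : (2 : ℝ) ^ ((s - 2) / r) * D ^ (s - 2) = (2 * D ^ r) ^ ((s - 2) / r) := by
    rw [Real.mul_rpow (by norm_num) (by positivity), ← Real.rpow_mul hD.le,
      mul_div_cancel₀ _ hr0.ne']
  rw [e]
  apply Real.rpow_le_rpow_of_nonpos
  · positivity
  · have h1 := Real.rpow_le_rpow hY hYD hr0.le
    have h2 := Real.rpow_le_rpow hX.le hXD hr0.le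
    linarith
  · exact div_nonpos_of_nonpos_of_nonneg (by linarith) hr0.le

/-- Elementary algebraic bound (Remark 2.7 / Theorem 4.3): with
`N = (δ^r + X^r)^((r̂-2)/r) X^(r+1-r̂)` and `r̂ = min r 2`, one has
`X ≤ C (N^(1/(r-1)) + (δ^(2-r̂) N)^(1/(r+1-r̂)))` with `C > 0` depending only on
`r`. -/
theorem stmt11 (r : ℝ) (hr : 1 < r) :
    ∃ C : ℝ, 0 < C ∧
      ∀ δ X : ℝ, 0 ≤ δ → 0 < X →
        X ≤ C *
          (((δ ^ r + X ^ r) ^ ((min r 2 - 2) / r) * X ^ (r + 1 - min r 2)) ^ (1 / (r - 1)) +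
            (δ ^ (2 - min r 2) *
              ((δ ^ r + X ^ r) ^ ((min r 2 - 2) / r) * X ^ (r + 1 - min r 2))) ^
                (1 / (r + 1 - min r 2))) := by
  have hs : min r 2 ≤ 2 := min_le_right _ _
  have hsr : min r 2 ≤ r := min_le_left _ _
  generalize min r 2 = s at hs hsr
  set K : ℝ := 2 ^ ((s - 2) / r) with hKdef
  have hK : 0 < K := by positivity
  refine ⟨(K ^ (1 / (r - 1)))⁻¹ + (K ^ (1 / (r + 1 - s)))⁻¹, by positivity, ?_⟩
  intro δ X hδ hX
  set A := (K ^ (1 / (r - 1)))⁻¹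
  set B := (K ^ (1 / (r + 1 - s)))⁻¹
  have hA : 0 < A := by positivity
  have hB : 0 < B := by positivity
  set N := (δ ^ r + X ^ r) ^ ((s - 2) / r) * X ^ (r + 1 - s) with hN
  have hN0 : 0 ≤ N := by positivity
  have hP : 0 ≤ N ^ (1 / (r - 1)) := by positivity
  have hQ : 0 ≤ (δ ^ (2 - s) * N) ^ (1 / (r + 1 - s)) := by positivity
  have hXp : 0 ≤ X ^ (r + 1 - s) := by positivity
  rcases le_total δ X with h | h
  · have hb := mul_le_mul_of_nonneg_right (aux_base r s X δ X hr hs hX hX hδ h le_rfl) hXp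
    rw [mul_assoc, ← Real.rpow_add hX, show s - 2 + (r + 1 - s) = r - 1 by ring] at hb
    have := aux_root K (r - 1) X N hK (by linarith) hX hb
    change X ≤ A * _ at this
    nlinarith [mul_nonneg hA.le hQ, mul_nonneg hB.le hP, mul_nonneg hB.le hQ]
  · have hd : 0 < δ := hX.trans_le h
    have hb := mul_le_mul_of_nonneg_left (mul_le_mul_of_nonneg_right
      (aux_base r s δ δ X hr hs hX hd hδ le_rfl h) hXp) (by positivity : 0 ≤ δ ^ (2 - s))
    have e : δ ^ (2 - s) * (2 ^ ((s - 2) / r) * δ ^ (s - 2) * X ^ (r + 1 - s))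
        = K * X ^ (r + 1 - s) := by
      have : δ ^ (2 - s) * δ ^ (s - 2) = 1 := by
        rw [← Real.rpow_add hd]; simp
      rw [← hKdef]
      linear_combination K * X ^ (r + 1 - s) * this
    rw [e] at hb
    have := aux_root K (r + 1 - s) X _ hK (by linarith) hX hb
    change X ≤ B * (δ ^ (2 - s) * N) ^ (1 / (r + 1 - s)) at this
    nlinarith [mul_nonneg hA.le hQ, mul_nonneg hB.le hP, mul_nonneg hA.le hP]
end
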